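/- Let H_ω be a weighted analytic Hilbert space and let φ be an analytic self-map of the unit disk D which is a symbol for H_ω and satisfies ‖φ‖_∞ = 1. Then lim_{n→∞} [a_n(C_φ)]^{1/n} = 1. -/

import Mathlib

/-!
The upper bound is trivial: `aₙ(C_φ) ≤ ‖C_φ‖`. For the lower bound, fix `L > 0`. Since `‖φ‖_∞ = 1`
and `|φ|` is continuous on a segment `[0, z₁]` of the disk, `|φ|` takes there all values in an
interval `[|φ(0)|, R]` of hyperbolic length proportional to `L`. For each `n` pick points `z_k` on
that segment with `w_k = φ(z_k)` having moduli equally spaced in the hyperbolic metric.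

Rotating points to a common radius decreases pseudo-hyperbolic distances (`le_norm_blFactor`), so
the Blaschke product `B_j` vanishing at all `w_k`, `k ≠ j`, satisfies
`|B_j(w_j)| ≥ exp (-16 n / √L)` (`exp_le_norm_blProd`). As the `w_k` stay in `|w| ≤ R < 1`, the norm
of `B_j` in `H_ω` is `O(n)` (`blProd_mem`), and evaluations at the `z_k` are uniformly bounded
(`point_bound`). Now `C_φ B_j (z_k) = B_j(w_k)` vanishes for `k ≠ j`, and linear algebra
(`approxNumber_ge`) gives `aₙ(C_φ) ≥ exp (-16 n / √L) / O(n²)`. Taking `n`-th roots and then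
`L → ∞` finishes the proof (`tendsto_root`).
-/

open MeasureTheory Set Filter
open scoped ENNReal NNReal

noncomputable section

/-- The open unit disk in the complex plane. -/
def unitDisk : Set ℂ := {z : ℂ | ‖z‖ < 1}

/-- The Green function of the unit disk, `g(z,w) = log |(1 - w̄ z)/(z - w)|`,
with value `⊤` on the diagonal. -/
def greenFnE (z w : ℂ) : ℝ≥0∞ :=
  if z = w then ⊤ else ENNReal.ofReal (Real.log ‖(1 - (starRingEnd ℂ) w * z) / (z - w)‖)

/-- The Green energy `I(μ) = ∬ g(z,w) dμ(z) dμ(w)` of a measure. -/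
def greenEnergy (μ : Measure ℂ) : ℝ≥0∞ := ∫⁻ z, ∫⁻ w, greenFnE z w ∂μ ∂μ

/-- `greenV E = V(E)`: the infimum of energies of probability measures supported by a
compact subset of `E`. -/
def greenV (E : Set ℂ) : ℝ≥0∞ :=
  ⨅ (μ : Measure ℂ) (_ : IsProbabilityMeasure μ)
    (_ : ∃ K : Set ℂ, K ⊆ E ∧ IsCompact K ∧ μ Kᶜ = 0), greenEnergy μ

/-- The Green capacity `capa(E) = 1/V(E)` of `E` in the unit disk. -/
def greenCapa (E : Set ℂ) : ℝ≥0∞ := (greenV E)⁻¹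

/-- `e^{-1/capa(E)} = e^{-V(E)}`, with the value `0` when `V(E) = ∞` (i.e. `capa(E) = 0`). -/
def expNegV (E : Set ℂ) : ℝ :=
  if greenV E = ⊤ then 0 else Real.exp (-(greenV E).toReal)

/-- The pseudo-hyperbolic distance on the unit disk. -/
def pseudoDist (z w : ℂ) : ℝ := ‖(z - w) / (1 - (starRingEnd ℂ) z * w)‖

/-- The pseudo-hyperbolic diameter of a set. -/
def pseudoDiam (E : Set ℂ) : ℝ :=
  sSup {d : ℝ | ∃ z ∈ E, ∃ w ∈ E, d = pseudoDist z w}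

/-- The `n`-th approximation number `a_n(T) = inf {‖T - R‖ : rank R < n}`. -/
def approxNumber {E F : Type*} [NormedAddCommGroup E] [NormedAddCommGroup F]
    [NormedSpace ℂ E] [NormedSpace ℂ F] (T : E →L[ℂ] F) (n : ℕ) : ℝ :=
  sInf {c : ℝ | ∃ R : E →L[ℂ] F,
    Module.rank ℂ (LinearMap.range (R : E →ₗ[ℂ] F)) < (n : Cardinal) ∧ c = ‖T - R‖}

/-- The squared norm `‖f‖² = |f(0)|² + ∫_D |f'|² ω dA` (normalized area measure) of the
weighted analytic Hilbert space `H_ω`. -/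
def hwNormSq (ω : ℝ → ℝ) (f : ℂ → ℂ) : ℝ :=
  ‖f 0‖ ^ 2 + (∫ z in unitDisk, ‖deriv f z‖ ^ 2 * ω ‖z‖) / Real.pi

/-- Membership in the weighted analytic Hilbert space `H_ω`. -/
def memHw (ω : ℝ → ℝ) (f : ℂ → ℂ) : Prop :=
  DifferentiableOn ℂ f unitDisk ∧
    IntegrableOn (fun z => ‖deriv f z‖ ^ 2 * ω ‖z‖) unitDisk

/-- The coefficient weights `w_0 = 1`, `w_n = 2 n² ∫_0^1 r^{2n-1} ω(r) dr`. -/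
def wcoef (ω : ℝ → ℝ) (n : ℕ) : ℝ :=
  if n = 0 then 1 else 2 * (n : ℝ) ^ 2 * ∫ r in (0:ℝ)..1, r ^ (2 * n - 1) * ω r

/-- Taylor coefficient of `f` at `0`. -/
def taylorCoeff (f : ℂ → ℂ) (n : ℕ) : ℂ := iteratedDeriv n f 0 / (n.factorial : ℂ)

/-- `(1/2π) ∫_0^{2π} |f(r e^{it})|^p dt`. -/
def hpMean (p : ℝ) (f : ℂ → ℂ) (r : ℝ) : ℝ :=
  (1 / (2 * Real.pi)) *
    ∫ t in (0:ℝ)..(2 * Real.pi), ‖f ((r : ℂ) * Complex.exp ((t : ℂ) * Complex.I))‖ ^ p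

/-- The `H^p` norm. -/
def hpNorm (p : ℝ) (f : ℂ → ℂ) : ℝ :=
  sSup {m : ℝ | ∃ r ∈ Set.Ioo (0:ℝ) 1, m = hpMean p f r ^ (1 / p)}

/-- Membership in the Hardy space `H^p`. -/
def memHp (p : ℝ) (f : ℂ → ℂ) : Prop :=
  DifferentiableOn ℂ f unitDisk ∧
    BddAbove {m : ℝ | ∃ r ∈ Set.Ioo (0:ℝ) 1, m = hpMean p f r ^ (1 / p)}

/-- The squared `H²` norm `‖f‖² = Σ |b_n|²` in terms of Taylor coefficients. -/
def h2NormSq (f : ℂ → ℂ) : ℝ := ∑' n : ℕ, ‖taylorCoeff f n‖ ^ 2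

/-- Membership in the Hardy space `H²`. -/
def memH2 (f : ℂ → ℂ) : Prop :=
  DifferentiableOn ℂ f unitDisk ∧ Summable (fun n : ℕ => ‖taylorCoeff f n‖ ^ 2)

/-- The `n`-th Kolmogorov number. -/
def kolmogorovNumber {E F : Type*} [NormedAddCommGroup E] [NormedAddCommGroup F]
    [NormedSpace ℂ E] [NormedSpace ℂ F] (T : E →L[ℂ] F) (n : ℕ) : ℝ :=
  ⨅ (S : Submodule ℂ F) (_ : Module.rank ℂ S < (n : Cardinal)),
    ⨆ x : {x : E // ‖x‖ ≤ 1}, Metric.infDist (T (x : E)) (S : Set F)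

/-- The `n`-th Gelfand number: infimum of norms of restrictions of `T` to closed
subspaces of codimension `< n`. -/
def gelfandNumber {X : Type*} [NormedAddCommGroup X] [NormedSpace ℂ X]
    (T : X →L[ℂ] X) (n : ℕ) : ℝ :=
  ⨅ (F : Submodule ℂ X) (_ : IsClosed (F : Set X))
    (_ : Module.rank ℂ (X ⧸ F) < (n : Cardinal)),
    ⨆ x : {x : X // x ∈ F ∧ ‖x‖ ≤ 1}, ‖T (x : X)‖

/-- `ε_n(T) = inf_{dim E < n} sup_{x ∈ B_X} dist (T x, T(E))`. -/
def epsApprox {X : Type*} [NormedAddCommGroup X] [NormedSpace ℂ X]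
    (T : X →L[ℂ] X) (n : ℕ) : ℝ :=
  ⨅ (E : Submodule ℂ X) (_ : Module.rank ℂ E < (n : Cardinal)),
    ⨆ x : {x : X // ‖x‖ ≤ 1}, Metric.infDist (T (x : X)) (T '' (E : Set X))


/-! ### Point evaluations on `H_ω` -/

/-- Mean value inequality on a circle. The angle runs over `(-π, π)` to match polar coordinates. -/
lemma enorm_mul_le_lintegral_circle {h : ℂ → ℂ} {z : ℂ} {r : ℝ} (hr : 0 < r)
    (hd : DiffContOnCl ℂ h (Metric.ball z r)) :
    ENNReal.ofReal (2 * Real.pi) * ‖h z‖ₑ ≤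
      ∫⁻ θ in Ioo (-Real.pi) Real.pi, ‖h (circleMap z r θ)‖ₑ := by
  have hd' : DiffContOnCl ℂ h (Metric.ball z |r|) := by rwa [abs_of_pos hr]
  have h1 := hd'.circleAverage
  rw [Real.circleAverage_eq_integral_add (-Real.pi),
    intervalIntegral.integral_comp_add_right (fun t => h (circleMap z r t)) (-Real.pi)] at h1
  have e : 2 * Real.pi + -Real.pi = Real.pi := by ring
  rw [zero_add, e] at h1
  have h2 : ((2 * Real.pi : ℝ)) • h z = ∫ θ in (-Real.pi)..Real.pi, h (circleMap z r θ) := by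
    rw [← h1, smul_smul, mul_inv_cancel₀ (by positivity), one_smul]
  rw [intervalIntegral.integral_of_le (by linarith [Real.pi_pos]),
    integral_Ioc_eq_integral_Ioo] at h2
  calc ENNReal.ofReal (2 * Real.pi) * ‖h z‖ₑ = ‖((2 * Real.pi : ℝ)) • h z‖ₑ := by
        rw [enorm_smul, Real.enorm_of_nonneg (by positivity)]
    _ ≤ _ := by rw [h2]; exact enorm_integral_le_lintegral_enorm _

/-- Area mean value inequality with the non-sharp constant `π d² / 2`: only the circles of radius in
`(d/2, d)` are used. -/
lemma area_mean {h : ℂ → ℂ} (hm : Measurable h) {z : ℂ} {d : ℝ} (hd0 : 0 < d)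
    (hd : DifferentiableOn ℂ h (Metric.ball z d)) :
    ENNReal.ofReal (Real.pi * d ^ 2 / 2) * ‖h z‖ₑ ≤ ∫⁻ w in Metric.ball z d, ‖h w‖ₑ := by
  have key : ∀ r ∈ Ioo (d / 2) d, ENNReal.ofReal (d / 2) * (ENNReal.ofReal (2 * Real.pi) * ‖h z‖ₑ) ≤
      ∫⁻ θ in Ioo (-Real.pi) Real.pi, ENNReal.ofReal r *
        (Metric.ball z d).indicator (fun w => ‖h w‖ₑ) (circleMap z r θ) := by
    intro r hr
    have hr0 : 0 < r := by linarith [hr.1]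
    rw [lintegral_const_mul']
    swap
    · exact ENNReal.ofReal_ne_top
    gcongr
    · exact hr.1.le
    · refine (enorm_mul_le_lintegral_circle hr0
        ((hd.mono (Metric.closedBall_subset_ball hr.2)).diffContOnCl_ball subset_rfl)).trans_eq ?_
      refine lintegral_congr fun θ => ?_
      rw [indicator_of_mem]
      exact Metric.closedBall_subset_ball hr.2 (circleMap_mem_closedBall z hr0.le θ)
  have hG : Measurable ((Metric.ball z d).indicator (fun w => ‖h w‖ₑ)) :=
    (hm.enorm).indicator Metric.isOpen_ball.measurableSet
  have hcm : ∀ p : ℝ × ℝ, z + Complex.polarCoord.symm p = circleMap z p.1 p.2 := by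
    intro p
    rw [Complex.polarCoord_symm_apply, circleMap, Complex.exp_mul_I]
    try push_cast
    try ring
  calc ENNReal.ofReal (Real.pi * d ^ 2 / 2) * ‖h z‖ₑ
      = ∫⁻ r in Ioo (d / 2) d, ENNReal.ofReal (d / 2) * (ENNReal.ofReal (2 * Real.pi) * ‖h z‖ₑ) := by
        rw [setLIntegral_const, Real.volume_Ioo, mul_right_comm, ← mul_assoc,
          ← ENNReal.ofReal_mul (by positivity),
          ← ENNReal.ofReal_mul (mul_nonneg (by positivity) (by linarith))]
        congr 2; ring
    _ ≤ ∫⁻ r in Ioo (d / 2) d, ∫⁻ θ in Ioo (-Real.pi) Real.pi, ENNReal.ofReal r *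
        (Metric.ball z d).indicator (fun w => ‖h w‖ₑ) (circleMap z r θ) :=
        setLIntegral_mono' measurableSet_Ioo key
    _ ≤ ∫⁻ r in Ioi 0, ∫⁻ θ in Ioo (-Real.pi) Real.pi, ENNReal.ofReal r *
        (Metric.ball z d).indicator (fun w => ‖h w‖ₑ) (circleMap z r θ) :=
        lintegral_mono_set fun r hr => by
          have := hr.1
          simp only [mem_Ioi]; linarith
    _ = ∫⁻ p in Complex.polarCoord.target, ENNReal.ofReal p.1 • 
        (Metric.ball z d).indicator (fun w => ‖h w‖ₑ) (z + Complex.polarCoord.symm p) := by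
        simp_rw [hcm]
        rw [Complex.polarCoord_target, Measure.volume_eq_prod, ← Measure.prod_restrict,
          lintegral_prod]
        · simp
        · refine Measurable.aemeasurable ?_
          refine Measurable.smul (measurable_fst.ennreal_ofReal) (hG.comp ?_)
          unfold circleMap
          fun_prop
    _ = ∫⁻ w, (Metric.ball z d).indicator (fun w => ‖h w‖ₑ) (z + w) :=
        Complex.lintegral_comp_polarCoord_symm
          (fun w => (Metric.ball z d).indicator (fun w => ‖h w‖ₑ) (z + w))
    _ = ∫⁻ w in Metric.ball z d, ‖h w‖ₑ := by
        rw [lintegral_add_left_eq_self (fun w => (Metric.ball z d).indicator (fun w => ‖h w‖ₑ) w) z,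
          lintegral_indicator Metric.isOpen_ball.measurableSet]

lemma unitDisk_eq : unitDisk = Metric.ball (0 : ℂ) 1 := by
  ext z; simp [unitDisk]

/-- On a smaller disk the derivatives of the functions in the unit ball of `H_ω` are uniformly bounded:
`ω` has a positive minimum on compact subsets of `[0, 1)`, so the area mean value inequality
applies to `f'` after bounding `|f'|` by `1 + |f'|²`. -/
lemma deriv_bound (ω : ℝ → ℝ) (hω_cont : ContinuousOn ω (Set.Ico 0 1))
    (hω_pos : ∀ r ∈ Set.Ico (0:ℝ) 1, 0 < ω r) {R : ℝ} (hR : R < 1) :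
    ∃ C : ℝ, ∀ f : ℂ → ℂ, memHw ω f → hwNormSq ω f ≤ 1 → ∀ z : ℂ, ‖z‖ ≤ R →
      ‖deriv f z‖ ≤ C := by
  by_cases hR0 : R < 0
  · exact ⟨0, fun f _ _ z hz => absurd (norm_nonneg z) (by linarith)⟩
  push Not at hR0
  set d := (1 - R) / 2 with hd
  have hd0 : 0 < d := by rw [hd]; linarith
  obtain ⟨x, hx, hxm⟩ := (isCompact_Icc (a := (0:ℝ)) (b := R + d)).exists_isMinOn
    ⟨0, by constructor <;> linarith⟩
    (hω_cont.mono fun x hx => ⟨hx.1, by linarith [hx.2]⟩)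
  have hm0 : 0 < ω x := hω_pos x ⟨hx.1, by linarith [hx.2]⟩
  refine ⟨(Real.pi * d ^ 2 + Real.pi / ω x) / (Real.pi * d ^ 2 / 2), fun f hf hf1 z hz => ?_⟩
  have hsub : Metric.ball z d ⊆ unitDisk := by
    intro w hw
    rw [mem_ball_iff_norm] at hw
    have := norm_le_insert' w z
    change ‖w‖ < 1
    linarith
  have hopen : IsOpen unitDisk := by rw [unitDisk_eq]; exact Metric.isOpen_ball
  have h1 := area_mean (measurable_deriv f) hd0 (z := z)
    ((hf.1.deriv hopen).mono hsub)
  have hpi := Real.pi_pos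
  have hnn : ∀ w ∈ unitDisk, 0 ≤ ‖deriv f w‖ ^ 2 * ω ‖w‖ := fun w hw =>
    mul_nonneg (by positivity) (hω_pos _ ⟨norm_nonneg _, hw⟩).le
  have hI : ∫ w in unitDisk, ‖deriv f w‖ ^ 2 * ω ‖w‖ ≤ Real.pi := by
    have : (∫ w in unitDisk, ‖deriv f w‖ ^ 2 * ω ‖w‖) / Real.pi ≤ 1 := by
      unfold hwNormSq at hf1
      nlinarith [sq_nonneg ‖f 0‖]
    rwa [div_le_one hpi] at this
  have hint : IntegrableOn (fun w => ‖deriv f w‖ ^ 2 * ω ‖w‖) (Metric.ball z d) := hf.2.mono_set hsub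
  have hfin : volume (Metric.ball z d) ≠ ⊤ := measure_ball_lt_top.ne
  have hint2 : IntegrableOn (fun w => 1 + (‖deriv f w‖ ^ 2 * ω ‖w‖) / ω x) (Metric.ball z d) :=
    (integrableOn_const hfin).add (hint.div_const _)
  have h2 : ∫⁻ w in Metric.ball z d, ‖deriv f w‖ₑ ≤
      ENNReal.ofReal (Real.pi * d ^ 2 + Real.pi / ω x) := by
    calc ∫⁻ w in Metric.ball z d, ‖deriv f w‖ₑ
        ≤ ∫⁻ w in Metric.ball z d, ENNReal.ofReal (1 + (‖deriv f w‖ ^ 2 * ω ‖w‖) / ω x) := by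
          refine setLIntegral_mono' measurableSet_ball fun w hw => ?_
          rw [← ofReal_norm]
          apply ENNReal.ofReal_le_ofReal
          have hw' : ω x ≤ ω ‖w‖ := hxm ⟨norm_nonneg _, by
            rw [mem_ball_iff_norm] at hw
            have := norm_le_insert' w z
            linarith⟩
          have : ‖deriv f w‖ ^ 2 ≤ (‖deriv f w‖ ^ 2 * ω ‖w‖) / ω x := by
            rw [le_div_iff₀ hm0]; gcongr
          nlinarith [sq_nonneg (‖deriv f w‖ - 1)]
      _ = ENNReal.ofReal (∫ w in Metric.ball z d, (1 + (‖deriv f w‖ ^ 2 * ω ‖w‖) / ω x)) := by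
          rw [ofReal_integral_eq_lintegral_ofReal hint2]
          filter_upwards [ae_restrict_mem measurableSet_ball] with w hw
          have := hnn w (hsub hw)
          positivity
      _ ≤ _ := by
          apply ENNReal.ofReal_le_ofReal
          rw [integral_add (integrableOn_const hfin : IntegrableOn (fun _ => (1:ℝ)) _ _)
            (hint.div_const _), integral_div]
          have h3 : ∫ w in Metric.ball z d, ‖deriv f w‖ ^ 2 * ω ‖w‖ ≤ Real.pi :=
            (setIntegral_mono_set hf.2 (by
              filter_upwards [ae_restrict_mem (hopen.measurableSet)] with w hw
              exact hnn w hw) (LE.le.eventuallyLE hsub)).trans hI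
          have h4 : ∫ w in Metric.ball z d, (1 : ℝ) = Real.pi * d ^ 2 := by
            simp [Measure.real, Complex.volume_ball, ENNReal.toReal_ofReal hd0.le]
            ring
          rw [h4]
          gcongr
  rw [← ofReal_norm, ← ENNReal.ofReal_mul (by positivity)] at h1
  have h3 := (ENNReal.ofReal_le_ofReal_iff (by positivity)).1 (h1.trans h2)
  rw [le_div_iff₀ (by positivity)]
  linarith

/-- Point evaluations at `|z| ≤ R < 1` are uniformly bounded functionals on `H_ω`. -/
lemma point_bound (ω : ℝ → ℝ) (hω_cont : ContinuousOn ω (Set.Ico 0 1))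
    (hω_pos : ∀ r ∈ Set.Ico (0:ℝ) 1, 0 < ω r)
    (H : Type) [NormedAddCommGroup H] [InnerProductSpace ℂ H]
    (ι : H →ₗ[ℂ] (ℂ → ℂ))
    (hι_mem : ∀ g : H, memHw ω (ι g))
    (hι_norm : ∀ g : H, ‖g‖ ^ 2 = hwNormSq ω (ι g)) {R : ℝ} (hR : R < 1) :
    ∃ M : ℝ, 0 < M ∧ ∀ g : H, ∀ z : ℂ, ‖z‖ ≤ R → ‖ι g z‖ ≤ M * ‖g‖ := by
  obtain ⟨C, hC⟩ := deriv_bound ω hω_cont hω_pos hR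
  have hopen : IsOpen unitDisk := by rw [unitDisk_eq]; exact Metric.isOpen_ball
  have hball : ∀ g : H, ‖g‖ ≤ 1 → ∀ z : ℂ, ‖z‖ ≤ R → ‖ι g z‖ ≤ 1 + |C| := by
    intro g hg z hz
    have hn1 : hwNormSq ω (ι g) ≤ 1 := by
      rw [← hι_norm]; exact pow_le_one₀ (norm_nonneg _) hg
    have hI : 0 ≤ ∫ w in unitDisk, ‖deriv (ι g) w‖ ^ 2 * ω ‖w‖ :=
      setIntegral_nonneg hopen.measurableSet fun w hw =>
        mul_nonneg (by positivity) (hω_pos _ ⟨norm_nonneg _, hw⟩).le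
    have h0 : ‖ι g 0‖ ≤ 1 := by
      have h5 : 0 ≤ (∫ w in unitDisk, ‖deriv (ι g) w‖ ^ 2 * ω ‖w‖) / Real.pi := by positivity
      unfold hwNormSq at hn1
      nlinarith [norm_nonneg (ι g 0)]
    have hzero : ‖(0 : ℂ)‖ ≤ R := by simpa using (norm_nonneg z).trans hz
    have h2 := (convex_closedBall (0 : ℂ) R).norm_image_sub_le_of_norm_deriv_le (f := ι g)
      (C := |C|) (x := 0) (y := z)
      (fun w hw => ((hι_mem g).1 w (by
        have : ‖w‖ ≤ R := by simpa using hw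
        change ‖w‖ < 1; linarith)).differentiableAt (hopen.mem_nhds (by
        have : ‖w‖ ≤ R := by simpa using hw
        change ‖w‖ < 1; linarith)))
      (fun w hw => (hC _ (hι_mem g) hn1 w (by simpa using hw)).trans (le_abs_self C))
      (by simpa using hzero) (by simpa using hz)
    have h3 := norm_le_insert' (ι g z) (ι g 0)
    rw [sub_zero] at h2
    nlinarith [abs_nonneg C, norm_nonneg z]
  refine ⟨1 + |C|, by positivity, fun g z hz => ?_⟩
  by_cases hg : g = 0
  · simp [hg]
  have hg0 : 0 < ‖g‖ := norm_pos_iff.2 hg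
  have := hball (((‖g‖⁻¹ : ℝ) : ℂ) • g) (by
    rw [norm_smul]; simp [hg0.ne']) z hz
  rw [map_smul, Pi.smul_apply, norm_smul, Complex.norm_real, norm_inv, norm_norm,
    inv_mul_le_iff₀ hg0] at this
  linarith

/-! ### Finite Blaschke products -/

/-- The Blaschke factor `(z - w) / (1 - w̄ z)`, without unimodular normalization. -/
def blFactor (w z : ℂ) : ℂ := (z - w) / (1 - (starRingEnd ℂ) w * z)

lemma norm_blDenom_ge (w z : ℂ) : 1 - ‖w‖ * ‖z‖ ≤ ‖1 - (starRingEnd ℂ) w * z‖ := by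
  have := norm_sub_norm_le (1 : ℂ) ((starRingEnd ℂ) w * z)
  rwa [norm_one, norm_mul, RCLike.norm_conj] at this

lemma norm_blDenom_sq (w z : ℂ) :
    ‖1 - (starRingEnd ℂ) w * z‖ ^ 2 = ‖z - w‖ ^ 2 + (1 - ‖w‖ ^ 2) * (1 - ‖z‖ ^ 2) := by
  simp only [← Complex.normSq_eq_norm_sq, Complex.normSq_apply]
  simp
  ring

lemma norm_blFactor_le_one {w z : ℂ} (hw : ‖w‖ < 1) (hz : ‖z‖ < 1) : ‖blFactor w z‖ ≤ 1 := by
  rw [blFactor, norm_div]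
  refine div_le_one_of_le₀ (abs_le_of_sq_le_sq' ?_ (norm_nonneg _)).2 (norm_nonneg _)
  rw [norm_blDenom_sq]
  have h1 : 0 ≤ 1 - ‖w‖ ^ 2 := by nlinarith [norm_nonneg w]
  have h2 : 0 ≤ 1 - ‖z‖ ^ 2 := by nlinarith [norm_nonneg z]
  nlinarith [mul_nonneg h1 h2]

/-- The pseudo-hyperbolic distance does not increase when `w` and `z` are rotated onto the same
radius. -/
lemma le_norm_blFactor {w z : ℂ} (hw : ‖w‖ < 1) (hz : ‖z‖ < 1) :
    |‖z‖ - ‖w‖| / (1 - ‖w‖ * ‖z‖) ≤ ‖blFactor w z‖ := by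
  have hw0 := norm_nonneg w
  have hz0 := norm_nonneg z
  have h0 : 0 < 1 - ‖w‖ * ‖z‖ := by nlinarith
  have h0' : 0 < ‖1 - (starRingEnd ℂ) w * z‖ := h0.trans_le (norm_blDenom_ge w z)
  rw [blFactor, norm_div, div_le_div_iff₀ h0 h0']
  refine (abs_le_of_sq_le_sq' ?_ (by positivity)).2
  rw [mul_pow, mul_pow, norm_blDenom_sq, sq_abs]
  have h1 : 0 ≤ 1 - ‖w‖ ^ 2 := by nlinarith
  have h2 : 0 ≤ 1 - ‖z‖ ^ 2 := by nlinarith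
  have h3 : (‖z‖ - ‖w‖) ^ 2 ≤ ‖z - w‖ ^ 2 := by
    rw [← sq_abs (‖z‖ - ‖w‖)]
    exact pow_le_pow_left₀ (abs_nonneg _) (abs_norm_sub_norm_le z w) 2
  have h4 : (1 - ‖w‖ * ‖z‖) ^ 2 = (‖z‖ - ‖w‖) ^ 2 + (1 - ‖w‖ ^ 2) * (1 - ‖z‖ ^ 2) := by ring
  rw [h4]
  nlinarith [mul_nonneg (sub_nonneg.2 h3) (mul_nonneg h1 h2)]

lemma hasDerivAt_blFactor {w z : ℂ} {R : ℝ} (hR : R < 1) (hw : ‖w‖ ≤ R) (hz : ‖z‖ < 1) :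
    ∃ D : ℂ, HasDerivAt (blFactor w) D z ∧ ‖D‖ ≤ ((1 - R) ^ 2)⁻¹ := by
  have hw0 := norm_nonneg w
  have hz0 := norm_nonneg z
  have hge : 1 - R ≤ ‖1 - (starRingEnd ℂ) w * z‖ := by
    refine le_trans ?_ (norm_blDenom_ge w z)
    nlinarith
  have hne : 1 - (starRingEnd ℂ) w * z ≠ 0 := by
    rw [← norm_pos_iff]; linarith
  have h1 : HasDerivAt (fun z => z - w) 1 z := (hasDerivAt_id z).sub_const w
  have h2 : HasDerivAt (fun z => 1 - (starRingEnd ℂ) w * z) (-((starRingEnd ℂ) w * 1)) z :=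
    ((hasDerivAt_id z).const_mul _).const_sub 1
  refine ⟨_, h1.div h2 hne, ?_⟩
  have e : 1 * (1 - (starRingEnd ℂ) w * z) - (z - w) * -((starRingEnd ℂ) w * 1)
      = ((1 - ‖w‖ ^ 2 : ℝ) : ℂ) := by
    have := Complex.mul_conj' w
    push_cast
    linear_combination -this
  rw [e, norm_div, norm_pow, Complex.norm_real, Real.norm_of_nonneg (by nlinarith), ← one_div]
  have : 0 < 1 - R := by linarith
  gcongr
  nlinarith

/-- The finite Blaschke product with zeros `w k`, `k ∈ s`. -/
def blProd (s : Finset ℕ) (w : ℕ → ℂ) (z : ℂ) : ℂ := ∏ k ∈ s, blFactor (w k) z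

lemma norm_blProd_le_one (s : Finset ℕ) {w : ℕ → ℂ} (hw : ∀ k, ‖w k‖ < 1) {z : ℂ}
    (hz : ‖z‖ < 1) : ‖blProd s w z‖ ≤ 1 := by
  rw [blProd, norm_prod]
  exact Finset.prod_le_one (fun _ _ => norm_nonneg _) fun k _ => norm_blFactor_le_one (hw k) hz

lemma hasDerivAt_blProd (s : Finset ℕ) {w : ℕ → ℂ} {R : ℝ} (hR : R < 1) (hw : ∀ k, ‖w k‖ ≤ R)
    {z : ℂ} (hz : ‖z‖ < 1) :
    ∃ D : ℂ, HasDerivAt (blProd s w) D z ∧ ‖D‖ ≤ s.card * ((1 - R) ^ 2)⁻¹ := by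
  induction s using Finset.induction_on with
  | empty =>
    refine ⟨0, ?_, by simp⟩
    have : blProd ∅ w = fun _ => 1 := by ext; simp [blProd]
    rw [this]; exact hasDerivAt_const _ _
  | insert a s ha ih =>
    obtain ⟨D, hD, hDn⟩ := ih
    obtain ⟨D', hD', hDn'⟩ := hasDerivAt_blFactor hR (hw a) hz
    have e : blProd (insert a s) w = fun z => blFactor (w a) z * blProd s w z := by
      ext; simp [blProd, Finset.prod_insert ha]
    refine ⟨_, by rw [e]; exact hD'.mul hD, ?_⟩
    have hw' : ∀ k, ‖w k‖ < 1 := fun k => (hw k).trans_lt hR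
    have h1 := norm_blProd_le_one s hw' hz
    have h2 := norm_blFactor_le_one (hw' a) hz
    rw [Finset.card_insert_of_notMem ha]
    push_cast
    refine (norm_add_le _ _).trans ?_
    rw [norm_mul, norm_mul]
    have h3 := mul_le_mul hDn' h1 (norm_nonneg _) (by positivity)
    have h4 := mul_le_mul h2 hDn (norm_nonneg _) zero_le_one
    linarith

lemma integrableOn_weight {ω : ℝ → ℝ} (hω_int : IntegrableOn ω (Set.Ico 0 1)) :
    IntegrableOn (fun z : ℂ => ω ‖z‖) unitDisk := by
  rw [unitDisk_eq, integrableOn_fun_norm_addHaar]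
  simp only [Complex.finrank_real_complex, smul_eq_mul]
  have h : IntegrableOn ω (Ioo 0 1) := hω_int.mono_set Ioo_subset_Ico_self
  refine Integrable.bdd_mul (c := 1) h (by fun_prop) ?_
  filter_upwards [ae_restrict_mem measurableSet_Ioo] with x hx
  have h1 := hx.1
  have h2 := hx.2
  norm_num
  rw [abs_le]
  constructor <;> linarith

/-- A Blaschke product with zeros in `|w| ≤ R` has bounded derivative, at most linear in its degree,
and the radial weight is integrable over the disk, so it lies in `H_ω` with squared seminorm at
most quadratic in its degree. -/
lemma blProd_mem {ω : ℝ → ℝ} (hω_pos : ∀ r ∈ Set.Ico (0:ℝ) 1, 0 < ω r)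
    (hω_int : IntegrableOn ω (Set.Ico 0 1)) (s : Finset ℕ) {w : ℕ → ℂ} {R : ℝ} (hR : R < 1)
    (hw : ∀ k, ‖w k‖ ≤ R) :
    memHw ω (blProd s w) ∧ (∫ z in unitDisk, ‖deriv (blProd s w) z‖ ^ 2 * ω ‖z‖) ≤
      (s.card * ((1 - R) ^ 2)⁻¹) ^ 2 * ∫ z in unitDisk, ω ‖z‖ := by
  have hmeas : MeasurableSet unitDisk := by rw [unitDisk_eq]; exact measurableSet_ball
  have hb : ∀ z ∈ unitDisk, ‖deriv (blProd s w) z‖ ^ 2 ≤ (s.card * ((1 - R) ^ 2)⁻¹) ^ 2 := by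
    intro z hz
    obtain ⟨D, hD, hDn⟩ := hasDerivAt_blProd s hR hw hz
    rw [hD.deriv]
    gcongr
  have hint : IntegrableOn (fun z => ‖deriv (blProd s w) z‖ ^ 2 * ω ‖z‖) unitDisk := by
    refine Integrable.bdd_mul (c := (s.card * ((1 - R) ^ 2)⁻¹) ^ 2) (integrableOn_weight hω_int)
      ((measurable_deriv _).norm.pow_const 2).aestronglyMeasurable ?_
    filter_upwards [ae_restrict_mem hmeas] with z hz
    rw [Real.norm_of_nonneg (by positivity)]
    exact hb z hz
  refine ⟨⟨fun z hz => ?_, hint⟩, ?_⟩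
  · obtain ⟨D, hD, hDn⟩ := hasDerivAt_blProd s hR hw hz
    exact hD.differentiableAt.differentiableWithinAt
  · rw [← integral_const_mul]
    refine setIntegral_mono_on hint ((integrableOn_weight hω_int).const_mul _) hmeas fun z hz => ?_
    exact mul_le_mul_of_nonneg_right (hb z hz) (hω_pos _ ⟨norm_nonneg _, hz⟩).le

/-! ### Separation of equally spaced points -/

/-- Lower bound for `tanh (t / 2)`, from `coth (t / 2) ≤ 1 + 2 / t ≤ (1 + 2 / √t)²`. The exponent
`1 / √t` is integrable near `0`, which is what makes the sum over the points linear in `n`. -/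
lemma exp_le_factor {t : ℝ} (ht : 0 < t) :
    Real.exp (-(4 / √t)) ≤ (1 - Real.exp (-t)) / (1 + Real.exp (-t)) := by
  have hs : 0 < √t := Real.sqrt_pos.2 ht
  have hss : √t * √t = t := Real.mul_self_sqrt ht.le
  have hx : 0 < Real.exp (-t) := Real.exp_pos _
  have hx1 : Real.exp (-t) < 1 := by rw [Real.exp_lt_one_iff]; linarith
  have hxt : Real.exp (-t) * (1 + t) ≤ 1 := by
    have h := Real.add_one_le_exp t
    have : Real.exp (-t) * Real.exp t = 1 := by rw [← Real.exp_add]; simp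
    nlinarith
  rw [Real.exp_neg, inv_eq_one_div, div_le_div_iff₀ (Real.exp_pos _) (by linarith)]
  have h1 : 1 + 2 / t ≤ Real.exp (4 / √t) := by
    have h2 : 1 + 2 / √t ≤ Real.exp (2 / √t) := by
      have := Real.add_one_le_exp (2 / √t); linarith
    have h3 : Real.exp (4 / √t) = Real.exp (2 / √t) ^ 2 := by
      rw [sq, ← Real.exp_add]; congr 1; ring
    have h4 : (1 + 2 / √t) ^ 2 ≤ Real.exp (2 / √t) ^ 2 := by gcongr
    have h5 : (2 / √t) ^ 2 = 4 / t := by rw [div_pow, Real.sq_sqrt ht.le]; norm_num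
    have h6 : 2 / t ≤ 4 / t := by gcongr; norm_num
    have h7 : 0 < 2 / √t := by positivity
    rw [h3]
    nlinarith
  have h8 : 1 + Real.exp (-t) ≤ (1 + 2 / t) * (1 - Real.exp (-t)) := by
    rw [← sub_nonneg]
    have : (1 + 2 / t) * (1 - Real.exp (-t)) - (1 + Real.exp (-t))
      = 2 * (1 - Real.exp (-t) * (1 + t)) / t := by field_simp; ring
    rw [this]
    apply div_nonneg _ ht.le
    linarith
  nlinarith

lemma sum_inv_sqrt_le (n : ℕ) : ∑ i ∈ Finset.range n, 1 / √((i : ℝ) + 1) ≤ 2 * √n := by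
  induction n with
  | zero => simp
  | succ n ih =>
    rw [Finset.sum_range_succ]
    push_cast
    have ha : √(n : ℝ) * √n = n := Real.mul_self_sqrt (by positivity)
    have hb : √((n : ℝ) + 1) * √((n : ℝ) + 1) = n + 1 := Real.mul_self_sqrt (by positivity)
    have hb0 : 0 < √((n : ℝ) + 1) := Real.sqrt_pos.2 (by positivity)
    have : 1 / √((n : ℝ) + 1) ≤ 2 * (√((n : ℝ) + 1) - √n) := by
      rw [div_le_iff₀ hb0]
      nlinarith [sq_nonneg (√((n : ℝ) + 1) - √n)]
    linarith

lemma sum_inv_sqrt_dist_le {n j : ℕ} (hj : j < n) :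
    ∑ k ∈ (Finset.range n).erase j, 1 / √|(j : ℝ) - k| ≤ 4 * √n := by
  have e : ∑ k ∈ (Finset.range n).erase j, 1 / √|(j : ℝ) - k| =
      ∑ k ∈ Finset.range n, 1 / √|(j : ℝ) - k| := by
    rw [Finset.sum_erase]
    simp
  have e1 : ∑ k ∈ Finset.range j, 1 / √|(j : ℝ) - k| = ∑ i ∈ Finset.range j, 1 / √((i : ℝ) + 1) := by
    rw [← Finset.sum_range_reflect]
    refine Finset.sum_congr rfl fun i hi => ?_
    have hi' := Finset.mem_range.1 hi
    have : (j : ℝ) - ((j - 1 - i : ℕ) : ℝ) = i + 1 := by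
      rw [Nat.sub_sub, Nat.cast_sub (by omega)]; push_cast; ring
    rw [this, abs_of_nonneg (by positivity)]
  have e2 : ∑ k ∈ Finset.Ico (j + 1) n, 1 / √|(j : ℝ) - k| =
      ∑ i ∈ Finset.range (n - (j + 1)), 1 / √((i : ℝ) + 1) := by
    rw [Finset.sum_Ico_eq_sum_range]
    refine Finset.sum_congr rfl fun i hi => ?_
    have : (j : ℝ) - ((j + 1 + i : ℕ) : ℝ) = -(i + 1) := by push_cast; ring
    rw [this, abs_neg, abs_of_nonneg (by positivity)]
  rw [e, ← Finset.sum_range_add_sum_Ico _ hj, Finset.sum_range_succ, e1, e2]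
  have h1 := sum_inv_sqrt_le j
  have h2 := sum_inv_sqrt_le (n - (j + 1))
  have h3 : √(j : ℝ) ≤ √n := Real.sqrt_le_sqrt (by exact_mod_cast hj.le)
  have h4 : √((n - (j + 1) : ℕ) : ℝ) ≤ √n := Real.sqrt_le_sqrt (by exact_mod_cast Nat.sub_le _ _)
  simp only [sub_self, abs_zero, Real.sqrt_zero, div_zero]
  linarith

/-- The modulus `(1 - p) / (1 + p) = tanh (-(log p) / 2)`; when `p` runs through a geometric
progression these moduli are equally spaced in the hyperbolic metric. -/
def radius (p : ℝ) : ℝ := (1 - p) / (1 + p)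

lemma radius_anti {p q : ℝ} (hp : 0 < p) (h : p ≤ q) : radius q ≤ radius p := by
  unfold radius
  rw [div_le_div_iff₀ (by linarith) (by linarith)]
  nlinarith

lemma radius_lt_one {p : ℝ} (hp : 0 < p) : radius p < 1 := by
  unfold radius
  rw [div_lt_one (by linarith)]; linarith

lemma radius_radius {a : ℝ} (ha : 0 ≤ a) : radius (radius a) = a := by
  unfold radius
  field_simp
  ring

/-- Pseudo-hyperbolic distance between two of the moduli with `p`-parameters in the geometric
progression of ratio `exp (-h)`. -/
lemma exp_le_radius_dist {p h : ℝ} (hp : 0 < p) (hh : 0 < h) {j k : ℕ} (hjk : j ≠ k) :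
    Real.exp (-(4 / √h * (1 / √|(j : ℝ) - k|))) ≤
      |radius (p * Real.exp (-(j * h))) - radius (p * Real.exp (-(k * h)))| /
        (1 - radius (p * Real.exp (-(k * h))) * radius (p * Real.exp (-(j * h)))) := by
  wlog hlt : j < k generalizing j k
  · have := this hjk.symm (by omega)
    rwa [abs_sub_comm, abs_sub_comm (radius _), mul_comm (radius _)] at this
  have hjk' : (0 : ℝ) < (k : ℝ) - j := by
    have : (j : ℝ) < k := by exact_mod_cast hlt
    linarith
  set a := p * Real.exp (-(j * h)) with ha
  have ha0 : 0 < a := by positivity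
  set x := Real.exp (-((k - j) * h)) with hx
  have hx0 : 0 < x := Real.exp_pos _
  have hx1 : x < 1 := by rw [hx, Real.exp_lt_one_iff]; nlinarith
  have hb : p * Real.exp (-(k * h)) = a * x := by
    rw [ha, hx, mul_assoc, ← Real.exp_add]; congr 2; ring
  have key := exp_le_factor (t := (k - j) * h) (by positivity)
  rw [← hx] at key
  rw [hb, abs_sub_comm (j : ℝ), abs_of_pos hjk']
  have e1 : |radius a - radius (a * x)| / (1 - radius (a * x) * radius a) = (1 - x) / (1 + x) := by
    rw [abs_sub_comm, abs_of_nonneg (sub_nonneg.2 (radius_anti (by positivity) (by nlinarith)))]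
    unfold radius
    have h1 : (1 - a * x) / (1 + a * x) - (1 - a) / (1 + a) =
      2 * a * (1 - x) / ((1 + a * x) * (1 + a)) := by field_simp; ring
    have h2 : 1 - (1 - a * x) / (1 + a * x) * ((1 - a) / (1 + a)) =
      2 * a * (1 + x) / ((1 + a * x) * (1 + a)) := by field_simp; ring
    rw [h1, h2]
    field_simp
  rw [e1]
  convert key using 3
  rw [Real.sqrt_mul hjk'.le]
  field_simp

/-- If the moduli of `w 0, …, w (n - 1)` are equally spaced along a hyperbolic segment of length
proportional to `L`, the Blaschke product vanishing at all of them but `w j` is at least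
`exp (-16 n / √L)` at `w j`. -/
lemma exp_le_norm_blProd {p L : ℝ} (hp : 0 < p) (hL : 0 < L) {n j : ℕ} (hj : j < n)
    {w : ℕ → ℂ} (hw1 : ∀ k, ‖w k‖ < 1)
    (hw : ∀ k < n, ‖w k‖ = radius (p * Real.exp (-(k * (L / n))))) :
    Real.exp (-(16 / √L * n)) ≤ ‖blProd ((Finset.range n).erase j) w (w j)‖ := by
  have hn : (0 : ℝ) < n := by exact_mod_cast (Nat.zero_le j).trans_lt hj
  have hh : 0 < L / n := by positivity
  rw [blProd, norm_prod]
  calc Real.exp (-(16 / √L * n))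
      ≤ Real.exp (∑ k ∈ (Finset.range n).erase j, -(4 / √(L / n) * (1 / √|(j : ℝ) - k|))) := by
        apply Real.exp_le_exp.2
        rw [Finset.sum_neg_distrib, ← Finset.mul_sum, neg_le_neg_iff]
        have h1 := sum_inv_sqrt_dist_le hj
        have hsq : √(n : ℝ) * √n = n := Real.mul_self_sqrt hn.le
        calc _ ≤ 4 / √(L / n) * (4 * √n) := by gcongr
          _ = 16 / √L * (√n * √n) := by
            rw [Real.sqrt_div hL.le]
            have := Real.sqrt_pos.2 hL
            have := Real.sqrt_pos.2 hn
            field_simp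
            norm_num
          _ = _ := by rw [hsq]
    _ = ∏ k ∈ (Finset.range n).erase j, Real.exp (-(4 / √(L / n) * (1 / √|(j : ℝ) - k|))) :=
        Real.exp_sum _ _
    _ ≤ _ := by
        refine Finset.prod_le_prod (fun _ _ => (Real.exp_pos _).le) fun k hk => ?_
        rw [Finset.mem_erase, Finset.mem_range] at hk
        refine le_trans ?_ (le_norm_blFactor (hw1 k) (hw1 j))
        rw [hw k hk.2, hw j hj]
        exact exp_le_radius_dist hp hh (Ne.symm hk.1)

/-! ### Approximation numbers -/

/-- Lower bound from a biorthogonal system: an operator `R` of rank `< n` kills a nontrivial combination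
`∑ a j • g j`, and testing `T` on it with the functional `e k` for which `|a k|` is largest bounds
`‖T - R‖` from below. -/
lemma approxNumber_ge {H : Type} [NormedAddCommGroup H] [NormedSpace ℂ H] (T : H →L[ℂ] H)
    {n : ℕ} (hn : 0 < n) (e : ℕ → H →ₗ[ℂ] ℂ) (g : ℕ → H) {M A δ : ℝ} (hM : 0 < M) (hA : 0 < A)
    (he : ∀ k < n, ∀ x, ‖e k x‖ ≤ M * ‖x‖) (hg : ∀ j < n, ‖g j‖ ≤ A)
    (hne : ∀ j < n, ∀ k < n, j ≠ k → e k (T (g j)) = 0)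
    (hδ : ∀ k < n, δ ≤ ‖e k (T (g k))‖) :
    δ / (M * (n * A)) ≤ approxNumber T n := by
  unfold approxNumber
  refine le_csInf ⟨‖T - 0‖, 0, ?_, rfl⟩ ?_
  · simp [hn]
  rintro c ⟨R, hR, rfl⟩
  let S : (Fin n → ℂ) →ₗ[ℂ] H := Fintype.linearCombination ℂ (fun j : Fin n => g j)
  have hS : ∀ a, S a = ∑ j, a j • g j := fun a => Fintype.linearCombination_apply _ _ _
  obtain ⟨a, ha0, ha⟩ : ∃ a : Fin n → ℂ, a ≠ 0 ∧ R (S a) = 0 := by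
    by_contra! hcon
    let Q := (R : H →ₗ[ℂ] H).rangeRestrict ∘ₗ S
    have hQ : Function.Injective Q := by
      rw [← LinearMap.ker_eq_bot, LinearMap.ker_eq_bot']
      intro a ha
      by_contra h0
      exact hcon a h0 (congrArg Subtype.val ha)
    have := LinearMap.rank_le_of_injective Q hQ
    rw [rank_fin_fun] at this
    exact absurd hR (not_lt.2 this)
  have : Nonempty (Fin n) := ⟨⟨0, hn⟩⟩
  obtain ⟨k, hk⟩ := Finite.exists_max (fun i => ‖a i‖)
  have hak : 0 < ‖a k‖ := by
    obtain ⟨i, hi⟩ := Function.ne_iff.1 ha0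
    exact (norm_pos_iff.2 hi).trans_le (hk i)
  have h1 : e k (T (S a)) = a k * e k (T (g k)) := by
    rw [hS, map_sum, map_sum, Finset.sum_eq_single k]
    · simp
    · intro j _ hj
      rw [map_smul, map_smul, hne j j.2 k k.2 (fun h => hj (Fin.ext h)), smul_zero]
    · simp
  have h2 : ‖S a‖ ≤ n * (‖a k‖ * A) := by
    rw [hS]
    refine (norm_sum_le _ _).trans ?_
    refine (Finset.sum_le_card_nsmul _ _ (‖a k‖ * A) fun j _ => ?_).trans_eq (by simp)
    rw [norm_smul]
    exact mul_le_mul (hk j) (hg j j.2) (norm_nonneg _) (norm_nonneg _)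
  have h3 : T (S a) = (T - R) (S a) := by simp [ha]
  have h4 : ‖a k‖ * δ ≤ ‖a k‖ * (‖T - R‖ * (M * (n * A))) := by
    calc ‖a k‖ * δ ≤ ‖e k (T (S a))‖ := by
          rw [h1, norm_mul]; gcongr; exact hδ k k.2
      _ ≤ M * ‖(T - R) (S a)‖ := by rw [← h3]; exact he k k.2 _
      _ ≤ M * (‖T - R‖ * (n * (‖a k‖ * A))) := by
          gcongr
          exact ((T - R).le_opNorm _).trans (by gcongr)
      _ = _ := by ring
  have hn' : (0 : ℝ) < n := by exact_mod_cast hn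
  rw [div_le_iff₀ (by positivity)]
  exact le_of_mul_le_mul_left h4 hak

/-- Bounded sequences that are at least `exp (-ε n)` up to a quadratic factor, for every `ε > 0`, have
`n`-th roots tending to `1`. -/
lemma tendsto_root {a : ℕ → ℝ} {B : ℝ} (ha0 : ∀ n, 0 ≤ a n) (hB : ∀ n, 0 < n → a n ≤ B)
    (h : ∀ ε > 0, ∃ K > 0, ∀ n : ℕ, 0 < n → Real.exp (-(ε * n)) / (K * n ^ 2) ≤ a n) :
    Tendsto (fun n : ℕ => a n ^ ((n : ℝ)⁻¹)) atTop (nhds 1) := by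
  have hinv : Tendsto (fun n : ℕ => ((n : ℝ)⁻¹)) atTop (nhds 0) := tendsto_inv_atTop_nhds_zero_nat
  have hconst : ∀ K > 0, Tendsto (fun n : ℕ => K ^ ((n : ℝ)⁻¹)) atTop (nhds (1 : ℝ)) := by
    intro K hK
    simpa using (tendsto_const_nhds (x := K)).rpow hinv (Or.inl hK.ne')
  have hnn : Tendsto (fun n : ℕ => (n : ℝ) ^ ((n : ℝ)⁻¹)) atTop (nhds 1) := by
    have := tendsto_rpow_div.comp (tendsto_natCast_atTop_atTop (R := ℝ))
    simpa [Function.comp_def] using this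
  rw [tendsto_order]
  constructor
  · intro b hb
    obtain ⟨ε, hε, hbε⟩ : ∃ ε > 0, b < Real.exp (-ε) := by
      have : Tendsto (fun ε : ℝ => Real.exp (-ε)) (nhdsWithin 0 (Ioi 0)) (nhds 1) := by
        have hc : Continuous fun ε : ℝ => Real.exp (-ε) := by fun_prop
        simpa using (hc.tendsto 0).mono_left nhdsWithin_le_nhds
      obtain ⟨ε, h1, h2⟩ := ((this.eventually (lt_mem_nhds hb)).and self_mem_nhdsWithin).exists
      exact ⟨ε, h2, h1⟩
    obtain ⟨K, hK, hKn⟩ := h ε hε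
    have hlim : Tendsto (fun n : ℕ => Real.exp (-ε) /
        (K ^ ((n : ℝ)⁻¹) * ((n : ℝ) ^ ((n : ℝ)⁻¹)) ^ 2)) atTop (nhds (Real.exp (-ε))) := by
      have := (tendsto_const_nhds (x := Real.exp (-ε))).div ((hconst K hK).mul (hnn.pow 2))
        (by norm_num)
      simpa [Pi.div_def] using this
    filter_upwards [hlim.eventually (lt_mem_nhds hbε), eventually_gt_atTop 0] with n h1 hn
    refine h1.trans_le ?_
    have hn' : (0 : ℝ) < n := by exact_mod_cast hn
    have e : Real.exp (-ε) / (K ^ ((n : ℝ)⁻¹) * ((n : ℝ) ^ ((n : ℝ)⁻¹)) ^ 2) =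
        (Real.exp (-(ε * n)) / (K * n ^ 2)) ^ ((n : ℝ)⁻¹) := by
      rw [Real.div_rpow (Real.exp_pos _).le (by positivity), Real.mul_rpow hK.le (by positivity),
        ← Real.exp_mul, ← Real.rpow_natCast, ← Real.rpow_natCast, ← Real.rpow_mul hn'.le,
        ← Real.rpow_mul hn'.le, mul_comm ((2 : ℕ) : ℝ)]
      congr 2
      field_simp
    rw [e]
    exact Real.rpow_le_rpow (by positivity) (hKn n hn) (by positivity)
  · intro b hb
    filter_upwards [(hconst (max B 1) (by positivity)).eventually (gt_mem_nhds hb),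
      eventually_gt_atTop 0] with n h1 hn
    refine lt_of_le_of_lt ?_ h1
    exact Real.rpow_le_rpow (ha0 n) ((hB n hn).trans (le_max_left _ _)) (by positivity)

/-! ### The limit -/

/-- For a symbol `φ` of a weighted analytic Hilbert space `H_ω` with
`‖φ‖_∞ = 1`, one has `lim aₙ(C_φ)^{1/n} = 1`. -/
theorem beta_eq_one_of_weighted
    (ω : ℝ → ℝ)
    (hω_cont : ContinuousOn ω (Set.Ico 0 1))
    (hω_pos : ∀ r ∈ Set.Ico (0:ℝ) 1, 0 < ω r)
    (hω_int : IntegrableOn ω (Set.Ico 0 1))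
    (H : Type) [NormedAddCommGroup H] [InnerProductSpace ℂ H] [CompleteSpace H]
    (ι : H →ₗ[ℂ] (ℂ → ℂ))
    (hι_mem : ∀ g : H, memHw ω (ι g))
    (hι_norm : ∀ g : H, ‖g‖ ^ 2 = hwNormSq ω (ι g))
    (hι_surj : ∀ f : ℂ → ℂ, memHw ω f → ∃ g : H, ∀ z ∈ unitDisk, ι g z = f z)
    (hι_inj : ∀ g : H, (∀ z ∈ unitDisk, ι g z = 0) → g = 0)
    (φ : ℂ → ℂ)
    (hφ_diff : DifferentiableOn ℂ φ unitDisk)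
    (hφ_maps : Set.MapsTo φ unitDisk unitDisk)
    (hφ_symbol : ∀ f : ℂ → ℂ, memHw ω f → memHw ω (f ∘ φ))
    (hφ_sup : IsLUB ((fun z => ‖φ z‖) '' unitDisk) 1)
    (Cφ : H →L[ℂ] H)
    (hCφ : ∀ g : H, ∀ z ∈ unitDisk, ι (Cφ g) z = ι g (φ z)) :
    Filter.Tendsto (fun n : ℕ => approxNumber Cφ n ^ ((n : ℝ)⁻¹)) Filter.atTop (nhds 1) := by
  set a := ‖φ 0‖ with ha
  have hzero : (0 : ℂ) ∈ unitDisk := by simp [unitDisk]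
  have ha1 : a < 1 := hφ_maps hzero
  have ha0 : 0 ≤ a := norm_nonneg _
  have hp : 0 < radius a := div_pos (by linarith) (by linarith)
  refine tendsto_root (B := ‖Cφ‖) (fun n => ?_) (fun n hn => ?_) (fun ε hε => ?_)
  · refine Real.sInf_nonneg ?_
    rintro c ⟨R, -, rfl⟩
    exact norm_nonneg _
  · refine csInf_le ⟨0, ?_⟩ ⟨0, by simp [hn], by simp⟩
    rintro c ⟨R, -, rfl⟩
    exact norm_nonneg _
  -- `L` is the hyperbolic length needed for the exponential loss per point to equal `ε`.
  set L : ℝ := (16 / ε) ^ 2 with hL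
  have hL0 : 0 < L := by positivity
  have hsL : 16 / √L = ε := by
    rw [hL, Real.sqrt_sq (by positivity)]; field_simp
  set R := radius (radius a * Real.exp (-L)) with hRdef
  have hR : R < 1 := radius_lt_one (by positivity)
  have haR : a ≤ R := by
    conv_lhs => rw [← radius_radius ha0]
    refine radius_anti (by positivity) ?_
    have : Real.exp (-L) ≤ 1 := by rw [Real.exp_le_one_iff]; linarith
    nlinarith
  obtain ⟨_, ⟨z₁, hz₁, rfl⟩, hRz, -⟩ := hφ_sup.exists_between hR
  have hz₁' : ‖z₁‖ < 1 := hz₁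
  -- `|φ|` is continuous on the segment `[0, z₁]`, so it takes every value in `[a, R]` there.
  have hex : ∀ r ∈ Icc a R, ∃ z : ℂ, ‖z‖ ≤ ‖z₁‖ ∧ ‖φ z‖ = r := by
    intro r hr
    have hmem : ∀ t ∈ Icc (0 : ℝ) 1, ‖(t : ℂ) * z₁‖ ≤ ‖z₁‖ := by
      intro t ht
      rw [norm_mul, Complex.norm_real, Real.norm_of_nonneg ht.1]
      exact mul_le_of_le_one_left (norm_nonneg _) ht.2
    have hcont : ContinuousOn (fun t : ℝ => ‖φ ((t : ℂ) * z₁)‖) (Icc 0 1) := by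
      refine (hφ_diff.continuousOn.comp (by fun_prop) fun t ht => ?_).norm
      exact (hmem t ht).trans_lt hz₁'
    obtain ⟨t, ht, htr⟩ := intermediate_value_Icc zero_le_one hcont
      (show r ∈ Icc _ _ by
        simp only [Complex.ofReal_zero, zero_mul, Complex.ofReal_one, one_mul]
        exact ⟨hr.1, hr.2.trans hRz.le⟩)
    exact ⟨_, hmem t ht, htr⟩
  obtain ⟨M, hM, hMb⟩ := point_bound ω hω_cont hω_pos H ι hι_mem hι_norm hz₁'
  set W : ℝ := (∫ z in unitDisk, ω ‖z‖) / Real.pi with hW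
  have hmeas : MeasurableSet unitDisk := by rw [unitDisk_eq]; exact measurableSet_ball
  have hopen : IsOpen unitDisk := by rw [unitDisk_eq]; exact Metric.isOpen_ball
  have hW0 : 0 ≤ W := div_nonneg (setIntegral_nonneg hmeas fun z hz =>
    (hω_pos _ ⟨norm_nonneg _, hz⟩).le) Real.pi_pos.le
  set C := ((1 - R) ^ 2)⁻¹ with hC
  have hA0 : 0 < √(1 + C ^ 2 * W) := Real.sqrt_pos.2 (by positivity)
  refine ⟨M * √(1 + C ^ 2 * W), by positivity, fun n hn => ?_⟩
  have hn' : (0 : ℝ) < n := by exact_mod_cast hn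
  have hn1 : (1 : ℝ) ≤ n := by exact_mod_cast hn
  -- The points of index `k ≥ n` play no role; `0` keeps them inside the required disks.
  have hpt : ∀ k : ℕ, ∃ z : ℂ, ‖z‖ ≤ ‖z₁‖ ∧ ‖φ z‖ ≤ R ∧
      (k < n → ‖φ z‖ = radius (radius a * Real.exp (-(k * (L / n))))) := by
    intro k
    by_cases hk : k < n
    · have hk' : (k : ℝ) ≤ n := by exact_mod_cast hk.le
      have hkL : (k : ℝ) * (L / n) ≤ L := by
        rw [mul_div_assoc', div_le_iff₀ hn']; nlinarith
      have hr : radius (radius a * Real.exp (-(k * (L / n)))) ∈ Icc a R := by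
        constructor
        · conv_lhs => rw [← radius_radius ha0]
          refine radius_anti (by positivity) (mul_le_of_le_one_right hp.le ?_)
          rw [Real.exp_le_one_iff, neg_nonpos]; positivity
        · exact radius_anti (by positivity) (by gcongr)
      obtain ⟨z, hz, hzr⟩ := hex _ hr
      exact ⟨z, hz, hzr.trans_le hr.2, fun _ => hzr⟩
    · exact ⟨0, by simp, haR, fun h => absurd h hk⟩
  choose z hzz hzR hzr using hpt
  have hzD : ∀ k, z k ∈ unitDisk := fun k => (hzz k).trans_lt hz₁'
  have hwD : ∀ k, ‖φ (z k)‖ < 1 := fun k => (hzR k).trans_lt hR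
  have hB : ∀ j, ∃ g : H, ∀ u ∈ unitDisk,
      ι g u = blProd ((Finset.range n).erase j) (fun k => φ (z k)) u := fun j =>
    hι_surj _ (blProd_mem hω_pos hω_int _ hR hzR).1
  choose g hg using hB
  have hgn : ∀ j < n, ‖g j‖ ≤ n * √(1 + C ^ 2 * W) := by
    intro j hj
    have hint : (∫ u in unitDisk, ‖deriv (ι (g j)) u‖ ^ 2 * ω ‖u‖) ≤
        (n * C) ^ 2 * ∫ u in unitDisk, ω ‖u‖ := by
      have e : (∫ u in unitDisk, ‖deriv (ι (g j)) u‖ ^ 2 * ω ‖u‖) = ∫ u in unitDisk,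
          ‖deriv (blProd ((Finset.range n).erase j) (fun k => φ (z k))) u‖ ^ 2 * ω ‖u‖ := by
        refine setIntegral_congr_fun hmeas fun u hu => ?_
        have : ι (g j) =ᶠ[nhds u] blProd ((Finset.range n).erase j) (fun k => φ (z k)) :=
          Filter.eventually_of_mem (hopen.mem_nhds hu) (hg j)
        simp only [this.deriv_eq]
      rw [e]
      refine (blProd_mem hω_pos hω_int _ hR hzR).2.trans ?_
      have hcard : (((Finset.range n).erase j).card : ℝ) ≤ n := by
        exact_mod_cast (Finset.card_erase_le).trans_eq (Finset.card_range n)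
      have : 0 ≤ ∫ u in unitDisk, ω ‖u‖ := setIntegral_nonneg hmeas fun z hz =>
        (hω_pos _ ⟨norm_nonneg _, hz⟩).le
      gcongr
    have h0 : ‖ι (g j) 0‖ ≤ 1 := by
      rw [hg j 0 hzero]
      exact norm_blProd_le_one _ hwD (by simp)
    refine (abs_le_of_sq_le_sq' ?_ (by positivity)).2
    rw [hι_norm, mul_pow, Real.sq_sqrt (by positivity), hwNormSq]
    have h1 : (∫ u in unitDisk, ‖deriv (ι (g j)) u‖ ^ 2 * ω ‖u‖) / Real.pi ≤
        (n * C) ^ 2 * W := by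
      rw [hW, mul_div_assoc']
      exact div_le_div_of_nonneg_right hint Real.pi_pos.le
    have h2 : ‖ι (g j) 0‖ ^ 2 ≤ 1 := pow_le_one₀ (norm_nonneg _) h0
    nlinarith
  have key := approxNumber_ge Cφ hn (fun k => (LinearMap.proj (z k)).comp ι) g hM
    (A := n * √(1 + C ^ 2 * W)) (δ := Real.exp (-(ε * n))) (by positivity)
    (fun k _ x => hMb x (z k) (hzz k)) hgn ?_ ?_
  · refine le_trans (le_of_eq ?_) key
    congr 1; ring
  · intro j hj k hk hjk
    change ι (Cφ (g j)) (z k) = 0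
    rw [hCφ _ _ (hzD k), hg j _ (hwD k), blProd]
    refine Finset.prod_eq_zero
      (Finset.mem_erase.2 ⟨Ne.symm hjk, Finset.mem_range.2 hk⟩) ?_
    simp [blFactor]
  · intro k hk
    change _ ≤ ‖ι (Cφ (g k)) (z k)‖
    rw [hCφ _ _ (hzD k), hg k _ (hwD k), ← hsL]
    exact exp_le_norm_blProd hp hL0 hk hwD hzr

end
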